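/- arXiv:1910.10709 — 2 statements merged into one kernel-verified Lean document; each statement's English description precedes it below -/
import Mathlib

section
/- Let A be a totally nonnegative n×n matrix that is invertible and satisfies a_{i,i+1} > 0 and a_{i+1,i} > 0 for all i = 1,…,n−1. Then A is oscillatory; in fact A^{n-1} is totally positive. -/
/-- A square real matrix is totally nonnegative if all its minors are nonnegative. -/
def TotallyNonneg {n : ℕ} (A : Matrix (Fin n) (Fin n) ℝ) : Prop :=
  ∀ (k : ℕ) (r c : Fin k → Fin n), StrictMono r → StrictMono c →
    0 ≤ (A.submatrix r c).det

/-- A square real matrix is totally positive if all its minors are positive. -/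
def TotallyPos {n : ℕ} (A : Matrix (Fin n) (Fin n) ℝ) : Prop :=
  ∀ (k : ℕ) (r c : Fin k → Fin n), StrictMono r → StrictMono c →
    0 < (A.submatrix r c).det

open Matrix

theorem det_schur {k : ℕ} (M : Matrix (Fin (k+1)) (Fin (k+1)) ℝ) (h : M 0 0 ≠ 0) :
    M.det = M 0 0 * (Matrix.of fun i j : Fin k =>
      M i.succ j.succ - M i.succ 0 * M 0 j.succ / M 0 0).det := by
  let B : Matrix (Fin (k+1)) (Fin (k+1)) ℝ := Matrix.of fun i j =>
    M i j - (if i = 0 then 0 else M i 0 / M 0 0) * M 0 j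
  have h1 : M.det = B.det := by
    refine Matrix.det_eq_of_forall_row_eq_smul_add_const
      (fun i => if i = 0 then 0 else M i 0 / M 0 0) 0 (by simp) ?_
    intro i j
    simp only [B, Matrix.of_apply]
    simp
  rw [h1, Matrix.det_succ_column_zero, Fin.sum_univ_succ]
  have h2 : ∀ i : Fin k, B i.succ 0 = 0 := by
    intro i
    simp only [B, Matrix.of_apply]
    simp [Fin.succ_ne_zero]
    field_simp
    simp
  simp only [h2]
  simp only [mul_zero, zero_mul, Finset.sum_const_zero, add_zero, Fin.val_zero, pow_zero, one_mul]
  congr 1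
  · simp [B]
  · congr 1
    ext i j
    simp [B, Fin.succ_ne_zero]
    ring

/-- Schur complement with respect to the first entry. -/
noncomputable def schur {n : ℕ} (A : Matrix (Fin (n+1)) (Fin (n+1)) ℝ) : Matrix (Fin n) (Fin n) ℝ :=
  Matrix.of fun i j => A i.succ j.succ - A i.succ 0 * A 0 j.succ / A 0 0

theorem minor_schur {n k : ℕ} (A : Matrix (Fin (n+1)) (Fin (n+1)) ℝ) (h : A 0 0 ≠ 0)
    (r c : Fin k → Fin n) :
    (A.submatrix (Fin.cons 0 (Fin.succ ∘ r) : Fin (k+1) → Fin (n+1))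
      (Fin.cons 0 (Fin.succ ∘ c) : Fin (k+1) → Fin (n+1))).det
      = A 0 0 * ((schur A).submatrix r c).det := by
  rw [det_schur _ (by simpa using h)]
  simp only [Matrix.submatrix_apply, Fin.cons_zero, Fin.cons_succ, Function.comp]
  rfl

theorem strictMono_cons {n k : ℕ} (r : Fin k → Fin n) (hr : StrictMono r) :
    StrictMono (Fin.cons 0 (Fin.succ ∘ r) : Fin (k+1) → Fin (n+1)) := by
  intro i j hij
  induction i using Fin.cases with
  | zero =>
    induction j using Fin.cases with
    | zero => exact absurd hij (lt_irrefl _)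
    | succ j => simp
  | succ i =>
    induction j using Fin.cases with
    | zero => simp at hij
    | succ j => simpa using hr (by simpa using hij)

theorem TotallyNonneg.entry {n : ℕ} {A : Matrix (Fin n) (Fin n) ℝ} (h : TotallyNonneg A)
    (i j : Fin n) : 0 ≤ A i j := by
  have := h 1 (fun _ => i) (fun _ => j) (Subsingleton.strictMono _) (Subsingleton.strictMono _)
  simpa using this

theorem strictMono_pair {n : ℕ} {a b : Fin n} (h : a < b) : StrictMono ![a, b] := by
  intro i j hij
  fin_cases i <;> fin_cases j <;> simp_all

theorem TotallyNonneg.two {n : ℕ} {A : Matrix (Fin n) (Fin n) ℝ} (h : TotallyNonneg A)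
    {i i' j j' : Fin n} (hi : i < i') (hj : j < j') : A i j' * A i' j ≤ A i j * A i' j' := by
  have := h 2 ![i, i'] ![j, j'] (strictMono_pair hi) (strictMono_pair hj)
  rw [Matrix.det_fin_two] at this
  simp at this
  linarith

theorem TotallyNonneg.submatrix {n m : ℕ} {A : Matrix (Fin n) (Fin n) ℝ} (h : TotallyNonneg A)
    {r c : Fin m → Fin n} (hr : StrictMono r) (hc : StrictMono c) :
    TotallyNonneg (A.submatrix r c) := by
  intro k r' c' hr' hc'
  simpa using h k (r ∘ r') (c ∘ c') (hr.comp hr') (hc.comp hc')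

theorem TotallyNonneg.rev {n : ℕ} {A : Matrix (Fin n) (Fin n) ℝ} (h : TotallyNonneg A) :
    TotallyNonneg (A.submatrix Fin.rev Fin.rev) := by
  intro k r c hr hc
  have := h k (Fin.rev ∘ r ∘ Fin.rev) (Fin.rev ∘ c ∘ Fin.rev)
    (fun i j hij => by simpa using hr (by simpa using hij))
    (fun i j hij => by simpa using hc (by simpa using hij))
  rw [← Matrix.det_submatrix_equiv_self Fin.revPerm]
  simpa [Function.comp_def] using this

theorem TotallyNonneg.transpose {n : ℕ} {A : Matrix (Fin n) (Fin n) ℝ} (h : TotallyNonneg A) :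
    TotallyNonneg Aᵀ := by
  intro k r c hr hc
  have := h k c r hc hr
  rwa [← Matrix.det_transpose, Matrix.transpose_submatrix] at this

theorem TotallyNonneg.corner {n : ℕ} {A : Matrix (Fin (n+1)) (Fin (n+1)) ℝ} (h : TotallyNonneg A)
    (hd : A.det ≠ 0) : 0 < A 0 0 := by
  by_contra hneg
  have h0 : A 0 0 = 0 := le_antisymm (not_lt.1 hneg) (h.entry 0 0)
  have hz : ∀ i j : Fin n, A 0 j.succ * A i.succ 0 = 0 := by
    intro i j
    have := h.two (Fin.succ_pos i) (Fin.succ_pos j)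
    rw [h0, zero_mul] at this
    exact le_antisymm this (mul_nonneg (h.entry _ _) (h.entry _ _))
  by_cases hrow : ∀ j : Fin n, A 0 j.succ = 0
  · apply hd
    apply Matrix.det_eq_zero_of_row_eq_zero 0
    intro j
    induction j using Fin.cases with
    | zero => exact h0
    | succ j => exact hrow j
  · push Not at hrow
    obtain ⟨j, hj⟩ := hrow
    apply hd
    apply Matrix.det_eq_zero_of_column_eq_zero 0
    intro i
    induction i using Fin.cases with
    | zero => exact h0
    | succ i => exact (mul_eq_zero.1 (hz i j)).resolve_left hj

theorem TotallyNonneg.schur {n : ℕ} {A : Matrix (Fin (n+1)) (Fin (n+1)) ℝ} (h : TotallyNonneg A)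
    (h0 : 0 < A 0 0) : TotallyNonneg (schur A) := by
  intro k r c hr hc
  have := h (k+1) _ _ (strictMono_cons r hr) (strictMono_cons c hc)
  rw [minor_schur A h0.ne'] at this
  exact nonneg_of_mul_nonneg_right this h0

theorem schur_det {n : ℕ} {A : Matrix (Fin (n+1)) (Fin (n+1)) ℝ} (h0 : A 0 0 ≠ 0) :
    A.det = A 0 0 * (schur A).det := det_schur A h0

theorem schur_det_ne {n : ℕ} {A : Matrix (Fin (n+1)) (Fin (n+1)) ℝ} (h0 : A 0 0 ≠ 0)
    (hd : A.det ≠ 0) : (schur A).det ≠ 0 := by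
  rw [schur_det h0] at hd
  exact right_ne_zero_of_mul hd

theorem TotallyNonneg.diag {n : ℕ} {A : Matrix (Fin n) (Fin n) ℝ} (h : TotallyNonneg A)
    (hd : A.det ≠ 0) (i : Fin n) : 0 < A i i := by
  induction n with
  | zero => exact i.elim0
  | succ n ih =>
    have h0 := h.corner hd
    induction i using Fin.cases with
    | zero => exact h0
    | succ i =>
      have := ih (h.schur h0) (schur_det_ne h0.ne' hd) i
      simp only [_root_.schur, Matrix.of_apply] at this
      have h2 : 0 ≤ A i.succ 0 * A 0 i.succ / A 0 0 :=
        div_nonneg (mul_nonneg (h.entry _ _) (h.entry _ _)) h0.le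
      linarith

theorem TotallyNonneg.schur_pos_lt {n : ℕ} {A : Matrix (Fin (n+1)) (Fin (n+1)) ℝ}
    (h : TotallyNonneg A) (hd : A.det ≠ 0) {i j : Fin n} (hij : i < j)
    (hp : 0 < A i.succ j.succ) : 0 < _root_.schur A i j := by
  have h0 := h.corner hd
  have hs := (h.schur h0).diag (schur_det_ne h0.ne' hd) i
  simp only [_root_.schur, Matrix.of_apply] at hs ⊢
  have h2 := h.two (Fin.succ_pos i) (Fin.succ_lt_succ_iff.2 hij)
  rw [sub_pos, div_lt_iff₀ h0] at hs ⊢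
  rcases (h.entry 0 j.succ).eq_or_lt with e | e
  · rw [← e, mul_zero]; positivity
  have hi : 0 < A 0 i.succ := by
    rcases (h.entry 0 i.succ).eq_or_lt with e' | e'
    · rw [← e', zero_mul] at h2
      have := h.diag hd i.succ
      nlinarith [mul_pos e this]
    · exact e'
  refine lt_of_mul_lt_mul_left ?_ hi.le
  nlinarith [mul_lt_mul_of_pos_left hs e, mul_le_mul_of_nonneg_right h2 h0.le]

theorem TotallyNonneg.schur_pos {n : ℕ} {A : Matrix (Fin (n+1)) (Fin (n+1)) ℝ}
    (h : TotallyNonneg A) (hd : A.det ≠ 0) {i j : Fin n}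
    (hp : 0 < A i.succ j.succ) : 0 < _root_.schur A i j := by
  rcases lt_trichotomy i j with hij | rfl | hij
  · exact h.schur_pos_lt hd hij hp
  · exact (h.schur (h.corner hd)).diag (schur_det_ne (h.corner hd).ne' hd) i
  · have := h.transpose.schur_pos_lt (by rwa [Matrix.det_transpose]) hij hp
    simp only [_root_.schur, Matrix.of_apply, Matrix.transpose_apply] at this ⊢
    rwa [mul_comm]

/-- Deleting row `j` and column `i` keeps the determinant nonzero if `A i j > 0`, `|i - j| ≤ 1`. -/
theorem TotallyNonneg.delete {n : ℕ} {A : Matrix (Fin (n+1)) (Fin (n+1)) ℝ}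
    (h : TotallyNonneg A) (hd : A.det ≠ 0) {i j : Fin (n+1)} (h1 : i.val ≤ j.val + 1)
    (h2 : j.val ≤ i.val + 1) (hp : 0 < A i j) :
    (A.submatrix j.succAbove i.succAbove).det ≠ 0 := by
  induction n with
  | zero => simp
  | succ n ih =>
    have step : ∀ {A : Matrix (Fin (n+1+1)) (Fin (n+1+1)) ℝ}, TotallyNonneg A → A.det ≠ 0 →
        ∀ {i j : Fin (n+1+1)}, i.val ≤ j.val + 1 → j.val ≤ i.val + 1 → 0 < A i j →
        i ≠ 0 → j ≠ 0 → (A.submatrix j.succAbove i.succAbove).det ≠ 0 := by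
      intro A h hd i j h1 h2 hp hi hj
      obtain ⟨i, rfl⟩ := Fin.exists_succ_eq.2 hi
      obtain ⟨j, rfl⟩ := Fin.exists_succ_eq.2 hj
      have h0 := h.corner hd
      have := ih (h.schur h0) (schur_det_ne h0.ne' hd) (i := i) (j := j)
        (by simpa using h1) (by simpa using h2) (h.schur_pos hd hp)
      have e := minor_schur A h0.ne' j.succAbove i.succAbove
      have ej : ∀ j : Fin (n+1), (Fin.cons 0 (Fin.succ ∘ j.succAbove) : Fin (n+1) → Fin (n+1+1))
          = j.succ.succAbove := by
        intro j
        ext x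
        induction x using Fin.cases with
        | zero => simp
        | succ x => simp
      rw [ej, ej] at e
      rw [e]
      exact mul_ne_zero h0.ne' this
    by_cases h00 : i ≠ 0 ∧ j ≠ 0
    · exact step h hd h1 h2 hp h00.1 h00.2
    by_cases hll : i ≠ Fin.last _ ∧ j ≠ Fin.last _
    · have hd' : (A.submatrix Fin.rev Fin.rev).det ≠ 0 := by
        have := Matrix.det_submatrix_equiv_self Fin.revPerm A
        rw [← this] at hd
        exact hd
      have := step h.rev hd' (i := i.rev) (j := j.rev)
        (by simp only [Fin.val_rev]; omega) (by simp only [Fin.val_rev]; omega) (by simpa using hp)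
        (by simpa [Fin.rev_eq_iff] using hll.1) (by simpa [Fin.rev_eq_iff] using hll.2)
      rw [← Matrix.det_submatrix_equiv_self Fin.revPerm]
      convert this using 2
      ext x y
      simp [Fin.rev_succAbove]
    · have hn : n = 0 := by
        simp only [Fin.ext_iff, ne_eq, Fin.val_last, Fin.val_zero] at h00 hll
        omega
      subst hn
      have hp' := hp.ne'
      have hij : (i = 0 ∧ j = 1) ∨ (i = 1 ∧ j = 0) := by
        simp only [Fin.ext_iff, ne_eq, Fin.val_last, Fin.val_zero, Fin.val_one] at h00 hll ⊢
        omega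
      rcases hij with ⟨rfl, rfl⟩ | ⟨rfl, rfl⟩
      · rw [Matrix.det_fin_one]
        exact hp'
      · rw [Matrix.det_fin_one]
        exact hp'


theorem det_mul_expand {k n : ℕ} (M : Matrix (Fin k) (Fin n) ℝ) (N : Matrix (Fin n) (Fin k) ℝ) :
    (M * N).det = ∑ f : Fin k → Fin n, (∏ i, M i (f i)) * (N.submatrix f id).det := by
  have h : (M * N) = fun i => ∑ j, M i j • N j := by
    ext i l
    simp [Matrix.mul_apply, Finset.sum_apply]
  have h2 := (Matrix.detRowAlternating (n := Fin k) (R := ℝ)).toMultilinearMap.map_sum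
    (fun (i : Fin k) (j : Fin n) => M i j • N j)
  rw [h]
  refine h2.trans (Finset.sum_congr rfl fun f _ => ?_)
  have h3 := (Matrix.detRowAlternating (n := Fin k) (R := ℝ)).toMultilinearMap.map_smul_univ
    (fun i => M i (f i)) (fun i => N (f i))
  exact h3

theorem cauchy_binet {k n : ℕ} (M : Matrix (Fin k) (Fin n) ℝ) (N : Matrix (Fin n) (Fin k) ℝ) :
    (Fintype.card (Equiv.Perm (Fin k)) : ℝ) * (M * N).det
      = ∑ f : Fin k → Fin n, (M.submatrix id f).det * (N.submatrix f id).det := by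
  have h1 : ∀ f : Fin k → Fin n, (M.submatrix id f).det * (N.submatrix f id).det
      = ∑ σ : Equiv.Perm (Fin k), (∏ i, M i ((f ∘ σ) i)) * (N.submatrix (f ∘ σ) id).det := by
    intro f
    rw [← Matrix.det_transpose (M.submatrix id f), Matrix.det_apply', Finset.sum_mul]
    refine Finset.sum_congr rfl fun σ _ => ?_
    have := Matrix.det_permute σ (N.submatrix f id)
    rw [Matrix.submatrix_submatrix] at this
    rw [Function.id_comp] at this
    rw [this]
    simp
    ring
  simp_rw [h1]
  rw [Finset.sum_comm]
  have h2 : ∀ σ : Equiv.Perm (Fin k),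
      ∑ f : Fin k → Fin n, (∏ i, M i ((f ∘ σ) i)) * (N.submatrix (f ∘ σ) id).det
       = (M * N).det := by
    intro σ
    rw [det_mul_expand]
    exact Fintype.sum_equiv (Equiv.arrowCongr σ.symm (Equiv.refl _)) _ _ (fun f => by
      simp [Equiv.arrowCongr, Function.comp_def])
  simp_rw [h2]
  simp

theorem cb_term_nonneg {k n : ℕ} {A B : Matrix (Fin n) (Fin n) ℝ} (hA : TotallyNonneg A)
    (hB : TotallyNonneg B) {r c : Fin k → Fin n} (hr : StrictMono r) (hc : StrictMono c)
    (f : Fin k → Fin n) :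
    0 ≤ (A.submatrix r f).det * (B.submatrix f c).det := by
  by_cases hf : Function.Injective f
  · have hm : StrictMono (f ∘ Tuple.sort f) :=
      (Tuple.monotone_sort f).strictMono_of_injective (hf.comp (Equiv.injective _))
    have h1 := hA k r _ hr hm
    have h2 := hB k _ c hm hc
    have e1 := Matrix.det_permute' (Tuple.sort f) (A.submatrix r f)
    have e2 := Matrix.det_permute (Tuple.sort f) (B.submatrix f c)
    rw [Matrix.submatrix_submatrix, Function.comp_id] at e1 e2
    rw [e1] at h1
    rw [e2] at h2
    have h3 := mul_nonneg h1 h2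
    rcases Int.units_eq_one_or (Equiv.Perm.sign (Tuple.sort f)) with e | e <;>
      rw [e] at h3 <;> simpa using h3
  · have : ∃ i j, f i = f j ∧ i ≠ j := by
      simpa [Function.Injective] using hf
    obtain ⟨i, j, hij, hne⟩ := this
    rw [Matrix.det_zero_of_row_eq (M := B.submatrix f c) hne (by ext x; simp [hij])]
    simp

theorem mul_card_pos (k : ℕ) : (0:ℝ) < (Fintype.card (Equiv.Perm (Fin k)) : ℝ) := by
  exact_mod_cast Fintype.card_pos

theorem cb_eq {k n : ℕ} (A B : Matrix (Fin n) (Fin n) ℝ) (r c : Fin k → Fin n) :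
    (Fintype.card (Equiv.Perm (Fin k)) : ℝ) * ((A * B).submatrix r c).det
      = ∑ f : Fin k → Fin n, (A.submatrix r f).det * (B.submatrix f c).det := by
  have := cauchy_binet (A.submatrix r id) (B.submatrix id c)
  rw [← Matrix.submatrix_mul_equiv A B r (Equiv.refl _) c]
  simpa using this

theorem TotallyNonneg.mul {n : ℕ} {A B : Matrix (Fin n) (Fin n) ℝ} (hA : TotallyNonneg A)
    (hB : TotallyNonneg B) : TotallyNonneg (A * B) := by
  intro k r c hr hc
  refine nonneg_of_mul_nonneg_right ?_ (mul_card_pos k)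
  rw [cb_eq]
  exact Finset.sum_nonneg fun f _ => cb_term_nonneg hA hB hr hc f

theorem TotallyNonneg.mul_pos {k n : ℕ} {A B : Matrix (Fin n) (Fin n) ℝ} (hA : TotallyNonneg A)
    (hB : TotallyNonneg B) {r c : Fin k → Fin n} (hr : StrictMono r) (hc : StrictMono c)
    (f : Fin k → Fin n) (h1 : 0 < (A.submatrix r f).det) (h2 : 0 < (B.submatrix f c).det) :
    0 < ((A * B).submatrix r c).det := by
  refine pos_of_mul_pos_right ?_ (mul_card_pos k).le
  rw [cb_eq]
  exact Finset.sum_pos' (fun f _ => cb_term_nonneg hA hB hr hc f)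
    ⟨f, Finset.mem_univ _, _root_.mul_pos h1 h2⟩

theorem exists_pull {n k : ℕ} {α : Fin k → Fin (n+1)} (hα : StrictMono α) {r : Fin (n+1)}
    (hr : ∀ i, α i ≠ r) : ∃ α' : Fin k → Fin n, StrictMono α' ∧ (∀ i, r.succAbove (α' i) = α i) ∧
      ∀ i, ((α' i : ℕ) = α i ∧ (α i : ℕ) < r) ∨ ((α' i : ℕ) + 1 = α i ∧ (r : ℕ) < α i) := by
  choose α' h using fun i => Fin.exists_succAbove_eq (hr i)
  refine ⟨α', ?_, h, ?_⟩
  · intro i j hij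
    have := hα hij
    rw [← h i, ← h j] at this
    exact (Fin.strictMono_succAbove r).lt_iff_lt.1 this
  · intro i
    have := h i
    have h3 := congrArg Fin.val this
    simp only [Fin.succAbove, Fin.lt_def] at h3
    split_ifs at h3 with h4 <;> simp at h3 h4 <;> omega

theorem strictMono_ge {n k : ℕ} {α : Fin k → Fin n} (hα : StrictMono α) (i : Fin k) :
    (i : ℕ) ≤ α i := by
  obtain ⟨i, hi⟩ := i
  induction i with
  | zero => simp
  | succ i ih =>
    have h1 := ih (by omega)
    have h2 : α ⟨i, by omega⟩ < α ⟨i+1, hi⟩ := hα (by simp [Fin.lt_def])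
    simp only [Fin.lt_def] at *
    omega

theorem key {n : ℕ} : ∀ {k : ℕ} {A : Matrix (Fin n) (Fin n) ℝ}, TotallyNonneg A → A.det ≠ 0 →
    ∀ {α β : Fin k → Fin n}, StrictMono α → StrictMono β →
    (∀ i, (α i : ℕ) ≤ β i + 1 ∧ (β i : ℕ) ≤ α i + 1) →
    (∀ i j, i < j → α i < β j ∧ β i < α j) → (∀ i, 0 < A (α i) (β i)) →
    0 < (A.submatrix α β).det := by
  induction n with
  | zero =>
    intro k A hA hd α β hα hβ h1 h2 h3
    have : k = 0 := by
      by_contra h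
      exact (α ⟨0, by omega⟩).elim0
    subst this
    simp
  | succ n ih =>
    intro k A hA hd α β hα hβ h1 h2 h3
    have hk : k ≤ n + 1 := by
      simpa using Fintype.card_le_of_injective α hα.injective
    rcases hk.eq_or_lt with rfl | hk
    · refine lt_of_le_of_ne (hA _ _ _ hα hβ) (Ne.symm ?_)
      have hid : ∀ γ : Fin (n+1) → Fin (n+1), StrictMono γ → γ = id := by
        intro γ hγ
        have e := hγ.range_inj (g := id) strictMono_id
        apply e.1
        rw [(Finite.injective_iff_surjective.1 hγ.injective).range_eq]
        simp
      rw [hid α hα, hid β hβ]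
      simpa using hd
    -- find the pair to delete
    have main : ∃ r c : Fin (n+1), (∀ i, α i ≠ r) ∧ (∀ i, β i ≠ c) ∧ c.val ≤ r.val + 1 ∧
        r.val ≤ c.val + 1 ∧ 0 < A c r ∧
        ∀ i, (((α i : ℕ) < r ∧ (β i : ℕ) < c ∧ (α i : ℕ) = β i) ∨
           ((α i : ℕ) < r ∧ (c : ℕ) < β i ∧ (α i : ℕ) + 1 = β i) ∨
           ((r : ℕ) < α i ∧ (β i : ℕ) < c ∧ (β i : ℕ) + 1 = α i) ∨
           ((r : ℕ) < α i ∧ (c : ℕ) < β i ∧ (r : ℕ) < β i ∧ (c : ℕ) < α i)) := by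
      by_cases hall : ∀ i, (α i : ℕ) = i ∧ (β i : ℕ) = i
      · refine ⟨⟨k, hk⟩, ⟨k, hk⟩, ?_, ?_, ?_, ?_, hA.diag hd _, ?_⟩
        · intro i h
          have := hall i; rw [h] at this; simp at this; omega
        · intro i h
          have := hall i; rw [h] at this; simp at this; omega
        · simp
        · simp
        · intro i
          have := hall i
          have := i.2
          left
          simp
          omega
      · have hex : ∃ m, ∃ hm : m < k, ¬ ((α ⟨m, hm⟩ : ℕ) = m ∧ (β ⟨m, hm⟩ : ℕ) = m) := by
          by_contra hcon
          push Not at hcon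
          exact hall fun i => by
            have := hcon i.1 i.2
            by_contra h'
            rw [not_and] at h'
            exact h' (by tauto) (by tauto)
        classical
        let m := Nat.find hex
        obtain ⟨hmk, hm⟩ := Nat.find_spec hex
        have hlt : ∀ i : Fin k, (i : ℕ) < m → (α i : ℕ) = i ∧ (β i : ℕ) = i := by
          intro i hi
          have := Nat.find_min hex hi
          by_contra h'
          exact this ⟨i.2, h'⟩
        have hgt : ∀ i : Fin k, m < (i : ℕ) → (α ⟨m, hmk⟩ : ℕ) < α i ∧ (α ⟨m, hmk⟩ : ℕ) < β i ∧
            (β ⟨m, hmk⟩ : ℕ) < α i ∧ (β ⟨m, hmk⟩ : ℕ) < β i := by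
          intro i hi
          have h : (⟨m, hmk⟩ : Fin k) < i := hi
          exact ⟨hα h, (h2 _ _ h).1, (h2 _ _ h).2, hβ h⟩
        have heq : ∀ i : Fin k, (i : ℕ) = m → i = ⟨m, hmk⟩ := fun i hi => Fin.ext hi
        have ga := strictMono_ge hα ⟨m, hmk⟩
        have gb := strictMono_ge hβ ⟨m, hmk⟩
        have hm1 := h1 ⟨m, hmk⟩
        have hm3 := h3 ⟨m, hmk⟩
        change ¬ ((α ⟨m, hmk⟩ : ℕ) = m ∧ (β ⟨m, hmk⟩ : ℕ) = m) at hm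
        have fin : ∀ r c : Fin (n+1), 0 < A c r →
            ((α ⟨m, hmk⟩ : ℕ) ≠ m ∧ (β ⟨m, hmk⟩ : ℕ) ≠ m ∧ (r : ℕ) = m ∧ (c : ℕ) = m) ∨
            ((α ⟨m, hmk⟩ : ℕ) = m ∧ (β ⟨m, hmk⟩ : ℕ) = m + 1 ∧ (r : ℕ) = m + 1 ∧ (c : ℕ) = m) ∨
            ((α ⟨m, hmk⟩ : ℕ) = m + 1 ∧ (β ⟨m, hmk⟩ : ℕ) = m ∧ (r : ℕ) = m ∧ (c : ℕ) = m + 1) →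
            ∃ r c : Fin (n+1), (∀ i, α i ≠ r) ∧ (∀ i, β i ≠ c) ∧ c.val ≤ r.val + 1 ∧
        r.val ≤ c.val + 1 ∧ 0 < A c r ∧
        ∀ i, (((α i : ℕ) < r ∧ (β i : ℕ) < c ∧ (α i : ℕ) = β i) ∨
           ((α i : ℕ) < r ∧ (c : ℕ) < β i ∧ (α i : ℕ) + 1 = β i) ∨
           ((r : ℕ) < α i ∧ (β i : ℕ) < c ∧ (β i : ℕ) + 1 = α i) ∨
           ((r : ℕ) < α i ∧ (c : ℕ) < β i ∧ (r : ℕ) < β i ∧ (c : ℕ) < α i)) := by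
          intro r c hp hrc
          simp only at ga gb
          refine ⟨r, c, ?_, ?_, by omega, by omega, hp, ?_⟩
          · intro i hi
            have hi := congrArg Fin.val hi
            rcases lt_trichotomy (i : ℕ) m with h | h | h
            · have := hlt i h; omega
            · rw [heq i h] at hi; omega
            · have := hgt i h; omega
          · intro i hi
            have hi := congrArg Fin.val hi
            rcases lt_trichotomy (i : ℕ) m with h | h | h
            · have := hlt i h; omega
            · rw [heq i h] at hi; omega
            · have := hgt i h; omega
          · intro i
            rcases lt_trichotomy (i : ℕ) m with h | h | h
            · have := hlt i h; omega
            · rw [heq i h]; omega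
            · have := hgt i h; omega
        simp only at ga gb
        by_cases c1 : (α ⟨m, hmk⟩ : ℕ) = m
        · exact fin (β ⟨m, hmk⟩) (α ⟨m, hmk⟩) hm3 (by omega)
        · by_cases c2 : (β ⟨m, hmk⟩ : ℕ) = m
          · exact fin (β ⟨m, hmk⟩) (α ⟨m, hmk⟩) hm3 (by omega)
          · exact fin ⟨m, by omega⟩ ⟨m, by omega⟩ (hA.diag hd _) (Or.inl ⟨c1, c2, rfl, rfl⟩)
    obtain ⟨r, c, hr, hc, hrc, hcr, hp, hi⟩ := main
    obtain ⟨α', ma, ea, va⟩ := exists_pull hα hr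
    obtain ⟨β', mb, eb, vb⟩ := exists_pull hβ hc
    have hdel := hA.delete hd hrc hcr hp
    have hTN' := hA.submatrix (Fin.strictMono_succAbove r) (Fin.strictMono_succAbove c)
    have := ih hTN' hdel ma mb
      (by
        intro i
        have := hi i; have := va i; have := vb i; have := h1 i
        omega)
      (by
        intro i j hij
        have := h2 i j hij
        have := hα hij
        have := hβ hij
        simp only [Fin.lt_def] at *
        have := hi i; have := va i; have := vb i; have := h1 i
        have := hi j; have := va j; have := vb j; have := h1 j
        omega)
      (by
        intro i
        simpa [ea, eb] using h3 i)
    rw [Matrix.submatrix_submatrix] at this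
    have e1 : r.succAbove ∘ α' = α := funext ea
    have e2 : c.succAbove ∘ β' = β := funext eb
    rwa [e1, e2] at this

theorem TotallyNonneg.one (n : ℕ) : ∀ (k : ℕ) (r : Fin k → Fin n), StrictMono r →
    0 < ((1 : Matrix (Fin n) (Fin n) ℝ).submatrix r r).det := by
  intro k r hr
  rw [Matrix.submatrix_one _ hr.injective]
  simp

/-- Positivity along a path. -/
theorem path_pos {n k : ℕ} {A : Matrix (Fin n) (Fin n) ℝ} (hA : TotallyNonneg A)
    (γ : ℕ → Fin k → Fin n) (hγ : ∀ t, StrictMono (γ t))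
    (hstep : ∀ t, 0 < (A.submatrix (γ t) (γ (t+1))).det) (m : ℕ) :
    TotallyNonneg (A ^ (m+1)) ∧ 0 < ((A ^ (m+1)).submatrix (γ 0) (γ (m+1))).det := by
  induction m with
  | zero => simpa using ⟨hA, hstep 0⟩
  | succ m ih =>
    rw [pow_succ]
    exact ⟨ih.1.mul hA, ih.1.mul_pos hA (hγ _) (hγ _) (γ (m+1)) ih.2 (hstep _)⟩

/-- The path of index sets from `a` to `b`. -/
def pth (k i a b t : ℕ) : ℕ :=
  if a ≤ b then min b (a + (t + i + 1 - k)) else max b (a - (t - i))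

theorem strictMono_le_top {n k : ℕ} {α : Fin k → Fin n} (hα : StrictMono α) (i : Fin k) :
    (α i : ℕ) + (k - i) ≤ n := by
  have h := strictMono_ge (α := Fin.rev ∘ α ∘ Fin.rev)
    (fun i j hij => by simpa using hα (by simpa using hij)) i.rev
  simp only [Function.comp, Fin.val_rev, Fin.rev_rev] at h
  have := (α i).2
  have := i.2
  omega

theorem totallyPos_pow {n : ℕ} (A : Matrix (Fin n) (Fin n) ℝ)
    (hTN : TotallyNonneg A) (hinv : A.det ≠ 0)
    (hdiag : ∀ i j : Fin n, i.val + 1 = j.val → 0 < A i j ∧ 0 < A j i) (m : ℕ)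
    (hm : n - 1 ≤ m + 1) :
    TotallyPos (A ^ (m + 1)) := by
  intro k α β hα hβ
  let γ : ℕ → Fin k → Fin n := fun t i => ⟨pth k i (α i) (β i) t, by
    have := (α i).2; have := (β i).2
    unfold pth; split_ifs <;> omega⟩
  have hval : ∀ t i, (γ t i : ℕ) = pth k i (α i) (β i) t := fun _ _ => rfl
  have hsep : ∀ t, ∀ i j, i < j → γ t i < γ t j ∧ γ t i < γ (t+1) j ∧ γ (t+1) i < γ t j := by
    intro t i j hij
    have h1 := hα hij
    have h2 := hβ hij
    have := j.2
    simp only [Fin.lt_def, hval] at *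
    unfold pth
    split_ifs <;> omega
  have hmono : ∀ t, StrictMono (γ t) := fun t i j hij => (hsep t i j hij).1
  have hclose : ∀ t i, (γ t i : ℕ) ≤ γ (t+1) i + 1 ∧ (γ (t+1) i : ℕ) ≤ γ t i + 1 := by
    intro t i
    simp only [hval]
    unfold pth
    split_ifs <;> omega
  have hstep : ∀ t, 0 < (A.submatrix (γ t) (γ (t+1))).det := by
    intro t
    refine key hTN hinv (hmono t) (hmono (t+1)) (hclose t)
      (fun i j hij => (hsep t i j hij).2) ?_
    intro i
    have hc := hclose t i
    rcases lt_trichotomy (γ t i : ℕ) (γ (t+1) i) with h | h | h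
    · exact (hdiag _ _ (by omega)).1
    · rw [← Fin.ext h]; exact hTN.diag hinv _
    · exact (hdiag _ _ (by omega)).2
  have hfin := (path_pos hTN γ hmono hstep m).2
  have e0 : γ 0 = α := by
    funext i
    apply Fin.ext
    have := i.2
    simp only [hval]
    unfold pth
    split_ifs <;> omega
  have e1 : γ (m+1) = β := by
    funext i
    apply Fin.ext
    have := i.2
    have := strictMono_ge hα i
    have := strictMono_ge hβ i
    have := strictMono_le_top hα i
    have := strictMono_le_top hβ i
    simp only [hval]
    unfold pth
    split_ifs <;> omega
  rwa [e0, e1] at hfin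

theorem stmt4 {n : ℕ} (A : Matrix (Fin n) (Fin n) ℝ)
    (hTN : TotallyNonneg A) (hinv : A.det ≠ 0)
    (hdiag : ∀ i j : Fin n, i.val + 1 = j.val → 0 < A i j ∧ 0 < A j i) :
    TotallyPos (A ^ (n - 1)) ∧ ∃ k : ℕ, 0 < k ∧ TotallyPos (A ^ k) := by

  refine ⟨?_, n - 1 + 1, by omega, totallyPos_pow A hTN hinv hdiag _ (by omega)⟩
  by_cases hn : 2 ≤ n
  · have h := totallyPos_pow A hTN hinv hdiag (n - 2) (by omega)
    have e : n - 2 + 1 = n - 1 := by omega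
    rwa [e] at h
  · have e : n - 1 = 0 := by omega
    rw [e, pow_zero]
    intro k r c hr hc
    have hrc : r = c := by
      funext i
      apply Fin.ext
      have := (r i).2
      have := (c i).2
      omega
    rw [hrc]
    exact TotallyNonneg.one n k c hc
end

section
/- Let A be an n×n oscillatory matrix. Then r(A) = max{r_ℓ(A), r_u(A)}, where r_ℓ(A) is the least positive integer w such that all lower-left corner minors of A^w, except possibly det(A^w), are positive, and r_u(A) is the least positive integer v such that all upper-right corner minors of A^v, except possibly det(A^v), are positive. -/
/-- The lower-left corner minor M({n−j+1,…,n}|{1,…,j}). -/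
def llMinor {n : ℕ} (M : Matrix (Fin n) (Fin n) ℝ) (j : ℕ) (hj : j ≤ n) : ℝ :=
  (M.submatrix (fun k : Fin j => (⟨n - j + k.val, by have := k.isLt; omega⟩ : Fin n))
      (fun k : Fin j => (⟨k.val, by have := k.isLt; omega⟩ : Fin n))).det

/-- The upper-right corner minor M({1,…,j}|{n−j+1,…,n}). -/
def urMinor {n : ℕ} (M : Matrix (Fin n) (Fin n) ℝ) (j : ℕ) (hj : j ≤ n) : ℝ :=
  (M.submatrix (fun k : Fin j => (⟨k.val, by have := k.isLt; omega⟩ : Fin n))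
      (fun k : Fin j => (⟨n - j + k.val, by have := k.isLt; omega⟩ : Fin n))).det


namespace TPaux
open Matrix Finset

/-- Vandermonde sign function. -/
noncomputable def vd {n k : ℕ} (p : Fin k → Fin n) : ℝ :=
  (Matrix.vandermonde (fun i => ((p i : ℕ) : ℝ))).det

lemma vd_perm {n k : ℕ} (p : Fin k → Fin n) (σ : Equiv.Perm (Fin k)) :
    vd (p ∘ σ) = (Equiv.Perm.sign σ : ℝ) * vd p := by
  unfold vd
  rw [← Matrix.det_permute]
  rfl

lemma vd_pos {n k : ℕ} {p : Fin k → Fin n} (hp : StrictMono p) : 0 < vd p := by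
  unfold vd
  rw [Matrix.det_vandermonde]
  refine Finset.prod_pos fun i _ => Finset.prod_pos fun j hj => ?_
  have h1 : p i < p j := hp (by simpa using hj)
  have h2 : ((p i : ℕ) : ℝ) < ((p j : ℕ) : ℝ) := by exact_mod_cast h1
  linarith

lemma vd_ne {n k : ℕ} {p : Fin k → Fin n} : vd p ≠ 0 ↔ Function.Injective p := by
  unfold vd
  rw [Matrix.det_vandermonde_ne_zero_iff]
  constructor
  · intro h a b hab
    exact h (by simp [hab])
  · intro h a b hab
    apply h
    apply Fin.ext
    have hab' : ((p a : ℕ) : ℝ) = ((p b : ℕ) : ℝ) := hab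
    exact_mod_cast hab'

lemma vd_cons {n k : ℕ} (x : Fin n) (S : Fin k → Fin n) :
    vd (Fin.cons x S : Fin (k+1) → Fin n) = (∏ j, (((S j : ℕ) : ℝ) - ((x : ℕ) : ℝ))) * vd S := by
  unfold vd
  rw [Matrix.det_vandermonde, Matrix.det_vandermonde, Fin.prod_univ_succ, Fin.prod_Ioi_zero]
  simp [Fin.prod_Ioi_succ]

lemma vd_cons_cons {n k : ℕ} (x y : Fin n) (S : Fin k → Fin n) :
    vd (Fin.cons x (Fin.cons y S : Fin (k+1) → Fin n) : Fin (k+2) → Fin n) * vd S =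
      (((y : ℕ) : ℝ) - ((x : ℕ) : ℝ)) * vd (Fin.cons x S : Fin (k+1) → Fin n)
        * vd (Fin.cons y S : Fin (k+1) → Fin n) := by
  rw [vd_cons, vd_cons, vd_cons, Fin.prod_univ_succ]
  simp only [Fin.cons_zero, Fin.cons_succ]
  ring

lemma exists_sort {n k : ℕ} {p : Fin k → Fin n} (hp : Function.Injective p) :
    ∃ σ : Equiv.Perm (Fin k), StrictMono (p ∘ σ) :=
  ⟨Tuple.sort p, (Tuple.monotone_sort p).strictMono_of_injective
    (hp.comp (Equiv.injective _))⟩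

lemma det_perm_perm {n k : ℕ} (A : Matrix (Fin n) (Fin n) ℝ) (p q : Fin k → Fin n)
    (σ τ : Equiv.Perm (Fin k)) :
    (A.submatrix (p ∘ σ) (q ∘ τ)).det =
      (Equiv.Perm.sign σ : ℝ) * (Equiv.Perm.sign τ : ℝ) * (A.submatrix p q).det := by
  have h : A.submatrix (p ∘ σ) (q ∘ τ) = ((A.submatrix p q).submatrix id τ).submatrix σ id := rfl
  rw [h, Matrix.det_permute, Matrix.det_permute']
  ring

lemma sign_sq {k : ℕ} (σ : Equiv.Perm (Fin k)) :
    (Equiv.Perm.sign σ : ℝ) * (Equiv.Perm.sign σ : ℝ) = 1 := by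
  rcases Int.units_eq_one_or (Equiv.Perm.sign σ) with h | h <;> simp [h]

lemma tn_vd {n k : ℕ} {A : Matrix (Fin n) (Fin n) ℝ} (hA : TotallyNonneg A)
    (p q : Fin k → Fin n) : 0 ≤ vd p * vd q * (A.submatrix p q).det := by
  by_cases hp : Function.Injective p
  swap
  · have : vd p = 0 := by by_contra h; exact hp (vd_ne.1 h)
    simp [this]
  by_cases hq : Function.Injective q
  swap
  · have : vd q = 0 := by by_contra h; exact hq (vd_ne.1 h)
    simp [this]
  obtain ⟨σ, hσ⟩ := exists_sort hp
  obtain ⟨τ, hτ⟩ := exists_sort hq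
  have h := mul_nonneg (mul_nonneg (vd_pos hσ).le (vd_pos hτ).le) (hA k _ _ hσ hτ)
  rw [det_perm_perm, vd_perm, vd_perm] at h
  have e1 := sign_sq σ
  have e2 := sign_sq τ
  calc (0:ℝ) ≤ _ := h
    _ = ((Equiv.Perm.sign σ : ℝ) * (Equiv.Perm.sign σ : ℝ)) *
        ((Equiv.Perm.sign τ : ℝ) * (Equiv.Perm.sign τ : ℝ)) *
        (vd p * vd q * (A.submatrix p q).det) := by ring
    _ = _ := by rw [e1, e2]; ring

/-- unordered Cauchy-Binet -/
lemma det_mul_sum {n k : ℕ} (X : Matrix (Fin k) (Fin n) ℝ) (Y : Matrix (Fin n) (Fin k) ℝ) :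
    (X * Y).det = ∑ f : Fin k → Fin n, (∏ i, X i (f i)) * (Y.submatrix f id).det := by
  have h1 : (X * Y) = fun i => ∑ j, X i j • Y j := by
    ext i l
    simp [Matrix.mul_apply]
  have h2 := (Matrix.detRowAlternating (n := Fin k) (R := ℝ)).toMultilinearMap.map_sum
    (fun i j => X i j • Y j)
  rw [h1]
  refine Eq.trans h2 ?_
  refine Finset.sum_congr rfl fun f _ => ?_
  exact (Matrix.detRowAlternating (n := Fin k) (R := ℝ)).toMultilinearMap.map_smul_univ
    (fun i => X i (f i)) (fun i => Y (f i))

lemma cauchy_binet {n k : ℕ} (X : Matrix (Fin k) (Fin n) ℝ) (Y : Matrix (Fin n) (Fin k) ℝ) :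
    (k.factorial : ℝ) * (X * Y).det =
      ∑ f : Fin k → Fin n, (X.submatrix id f).det * (Y.submatrix f id).det := by
  have key : ∀ σ : Equiv.Perm (Fin k), (X * Y).det =
      ∑ f : Fin k → Fin n,
        ((Equiv.Perm.sign σ : ℝ) * ∏ i, X i (f (σ i))) * (Y.submatrix f id).det := by
    intro σ
    rw [det_mul_sum]
    refine Fintype.sum_equiv (Equiv.arrowCongr σ (Equiv.refl _)) _ _ fun f => ?_
    have hf : (Equiv.arrowCongr σ (Equiv.refl (Fin n))) f = f ∘ σ.symm := rfl
    rw [hf]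
    have h : Y.submatrix (f ∘ σ.symm) id = (Y.submatrix f id).submatrix σ.symm id := rfl
    rw [h, Matrix.det_permute]
    simp only [Function.comp, Equiv.symm_apply_apply]
    rw [Equiv.Perm.sign_symm]
    have := sign_sq σ
    calc _ = 1 * ((∏ i, X i (f i)) * (Y.submatrix f id).det) := by ring
      _ = _ := by rw [← this]; ring
  have h2 : ∑ σ : Equiv.Perm (Fin k), (X * Y).det = (k.factorial : ℝ) * (X * Y).det := by
    simp [Fintype.card_perm]
  rw [← h2, Finset.sum_congr rfl fun σ _ => key σ, Finset.sum_comm]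
  refine Finset.sum_congr rfl fun f _ => ?_
  rw [← Finset.sum_mul]
  congr 1
  rw [← Matrix.det_transpose, Matrix.det_apply']
  rfl

lemma cb_ge {n k : ℕ} {A B : Matrix (Fin n) (Fin n) ℝ} (hA : TotallyNonneg A)
    (hB : TotallyNonneg B) {p q : Fin k → Fin n} (hp : StrictMono p) (hq : StrictMono q)
    (f : Fin k → Fin n) :
    (A.submatrix p f).det * (B.submatrix f q).det ≤
      (k.factorial : ℝ) * ((A * B).submatrix p q).det := by
  have h : (A * B).submatrix p q = A.submatrix p id * B.submatrix id q := by
    rw [← Matrix.submatrix_mul_equiv A B p (Equiv.refl _) q]; rfl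
  rw [h, cauchy_binet]
  refine Finset.single_le_sum (f := fun f => (A.submatrix p f).det * (B.submatrix f q).det)
    (fun g _ => ?_) (Finset.mem_univ f)
  by_cases hg : Function.Injective g
  · have h1 := tn_vd hA p g
    have h2 := tn_vd hB g q
    have h3 := mul_nonneg h1 h2
    have h4 : 0 < vd p * vd q * (vd g * vd g) :=
      mul_pos (mul_pos (vd_pos hp) (vd_pos hq)) (mul_self_pos.2 (vd_ne.2 hg))
    refine nonneg_of_mul_nonneg_right (a := vd p * vd q * (vd g * vd g)) ?_ h4
    calc (0:ℝ) ≤ _ := h3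
      _ = _ := by ring
  · have : ∃ i j, g i = g j ∧ i ≠ j := by
      simpa [Function.Injective] using hg
    obtain ⟨i, j, hij, hne⟩ := this
    have : (A.submatrix p g).det = 0 := Matrix.det_zero_of_column_eq hne (by intro l; simp [hij])
    simp [this]

lemma tn_mul {n : ℕ} {A B : Matrix (Fin n) (Fin n) ℝ} (hA : TotallyNonneg A)
    (hB : TotallyNonneg B) : TotallyNonneg (A * B) := by
  intro k p q hp hq
  have h := cb_ge hA hB hp hq p
  have h1 := mul_nonneg (hA k p p hp hp) (hB k p q hp hq)
  exact nonneg_of_mul_nonneg_right (h1.trans h) (by positivity)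

lemma tn_pow {n : ℕ} {A : Matrix (Fin n) (Fin n) ℝ} (hA : TotallyNonneg A) (m : ℕ) :
    TotallyNonneg (A ^ (m+1)) := by
  induction m with
  | zero => simpa using hA
  | succ m ih => rw [pow_succ]; exact tn_mul ih hA

lemma tn_transpose {n : ℕ} {A : Matrix (Fin n) (Fin n) ℝ} (hA : TotallyNonneg A) :
    TotallyNonneg Aᵀ := by
  intro k p q hp hq
  have h := hA k q p hq hp
  rw [← Matrix.det_transpose] at h
  exact h

/-- bordered minor -/
noncomputable def F {n k : ℕ} (A : Matrix (Fin n) (Fin n) ℝ) (S T : Fin k → Fin n)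
    (x y : Fin n) : ℝ :=
  (A.submatrix (Fin.cons x S : Fin (k+1) → Fin n) (Fin.cons y T : Fin (k+1) → Fin n)).det

/-- Schur complement entry -/
noncomputable def g {n k : ℕ} (A : Matrix (Fin n) (Fin n) ℝ) (S T : Fin k → Fin n) :
    Matrix (Fin n) (Fin n) ℝ :=
  A - A.submatrix id T * (A.submatrix S T)⁻¹ * A.submatrix S id

lemma schur {n k m : ℕ} (A : Matrix (Fin n) (Fin n) ℝ) (S T : Fin k → Fin n)
    (hD : (A.submatrix S T).det ≠ 0) (u v : Fin m → Fin n) :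
    (A.submatrix (Sum.elim u S) (Sum.elim v T)).det =
      (A.submatrix S T).det * ((g A S T).submatrix u v).det := by
  have : Invertible (A.submatrix S T) := Matrix.invertibleOfIsUnitDet _ (isUnit_iff_ne_zero.2 hD)
  have h : A.submatrix (Sum.elim u S) (Sum.elim v T) =
      Matrix.fromBlocks (A.submatrix u v) (A.submatrix u T) (A.submatrix S v)
        (A.submatrix S T) := by
    ext i j
    cases i <;> cases j <;> rfl
  rw [h, Matrix.det_fromBlocks₂₂, Matrix.invOf_eq_nonsing_inv]
  congr 2

lemma F_eq {n k : ℕ} (A : Matrix (Fin n) (Fin n) ℝ) (S T : Fin k → Fin n)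
    (hD : (A.submatrix S T).det ≠ 0) (x y : Fin n) :
    F A S T x y = (A.submatrix S T).det * g A S T x y := by
  have h := schur A S T hD ![x] ![y]
  rw [Matrix.det_fin_one] at h
  simp only [Matrix.submatrix_apply, Matrix.cons_val_zero] at h
  rw [← h]
  let e : Fin 1 ⊕ Fin k ≃ Fin (k+1) := finSumFinEquiv.trans (finCongr (by omega))
  have he : ∀ (z : Fin n) (R : Fin k → Fin n),
      (Fin.cons z R : Fin (k+1) → Fin n) ∘ e = Sum.elim ![z] R := by
    intro z R
    funext i
    rcases i with i | i
    · fin_cases i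
      rfl
    · have : e (Sum.inr i) = i.succ := by
        apply Fin.ext; simp [e]
      simp [this]
  rw [← he, ← he]
  exact (Matrix.det_submatrix_equiv_self e _).symm

lemma F2_eq {n k : ℕ} (A : Matrix (Fin n) (Fin n) ℝ) (S T : Fin k → Fin n)
    (hD : (A.submatrix S T).det ≠ 0) (x x' y y' : Fin n) :
    (A.submatrix (Fin.cons x (Fin.cons x' S : Fin (k+1) → Fin n) : Fin (k+2) → Fin n)
      (Fin.cons y (Fin.cons y' T : Fin (k+1) → Fin n) : Fin (k+2) → Fin n)).det *
      (A.submatrix S T).det =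
    F A S T x y * F A S T x' y' - F A S T x y' * F A S T x' y := by
  have h := schur A S T hD ![x, x'] ![y, y']
  rw [Matrix.det_fin_two] at h
  simp only [Matrix.submatrix_apply, Matrix.cons_val_zero, Matrix.cons_val_one] at h
  let e : Fin 2 ⊕ Fin k ≃ Fin (k+2) := finSumFinEquiv.trans (finCongr (by omega))
  have he : ∀ (z z' : Fin n) (R : Fin k → Fin n),
      (Fin.cons z (Fin.cons z' R : Fin (k+1) → Fin n) : Fin (k+2) → Fin n) ∘ e
        = Sum.elim ![z, z'] R := by
    intro z z' R
    funext i
    rcases i with i | i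
    · fin_cases i <;> rfl
    · have : e (Sum.inr i) = i.succ.succ := by
        apply Fin.ext; simp [e]
      simp [this]
  rw [← he, ← he] at h
  have h' := h.symm.trans (Matrix.det_submatrix_equiv_self e
    (A.submatrix (Fin.cons x (Fin.cons x' S : Fin (k+1) → Fin n) : Fin (k+2) → Fin n)
      (Fin.cons y (Fin.cons y' T : Fin (k+1) → Fin n) : Fin (k+2) → Fin n)))
  rw [← h', F_eq A S T hD, F_eq A S T hD, F_eq A S T hD, F_eq A S T hD]
  ring

lemma F_transpose {n k : ℕ} (A : Matrix (Fin n) (Fin n) ℝ) (S T : Fin k → Fin n)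
    (x y : Fin n) : F Aᵀ T S y x = F A S T x y := by
  unfold F
  rw [← Matrix.det_transpose]
  rfl

lemma F_left_mem {n k : ℕ} (A : Matrix (Fin n) (Fin n) ℝ) (S T : Fin k → Fin n)
    (x y : Fin n) (h : vd (Fin.cons x S : Fin (k+1) → Fin n) = 0) : F A S T x y = 0 := by
  have : ¬ Function.Injective (Fin.cons x S : Fin (k+1) → Fin n) := fun hh => vd_ne.2 hh h
  have : ∃ i j, (Fin.cons x S : Fin (k+1) → Fin n) i = (Fin.cons x S : Fin (k+1) → Fin n) j
      ∧ i ≠ j := by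
    simpa only [Function.Injective, not_forall, exists_prop] using this
  obtain ⟨i, j, hij, hne⟩ := this
  exact Matrix.det_zero_of_row_eq hne (by funext l; simp only [Matrix.submatrix_apply, hij])

lemma F_right_mem {n k : ℕ} (A : Matrix (Fin n) (Fin n) ℝ) (S T : Fin k → Fin n)
    (x y : Fin n) (h : vd (Fin.cons y T : Fin (k+1) → Fin n) = 0) : F A S T x y = 0 := by
  rw [← F_transpose]; exact F_left_mem _ _ _ _ _ h

lemma cross {n k : ℕ} {A : Matrix (Fin n) (Fin n) ℝ} (hA : TotallyNonneg A)
    {S T : Fin k → Fin n} (hS : StrictMono S) (hT : StrictMono T)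
    (hD : 0 < (A.submatrix S T).det) {a b c d : Fin n}
    (hpos : 0 < (((b : ℕ) : ℝ) - ((a : ℕ) : ℝ)) * (((d : ℕ) : ℝ) - ((c : ℕ) : ℝ)))
    (h0 : F A S T a c = 0) : F A S T a d = 0 ∨ F A S T b c = 0 := by
  by_contra hcon
  push Not at hcon
  obtain ⟨h1, h2⟩ := hcon
  have va : vd (Fin.cons a S : Fin (k+1) → Fin n) ≠ 0 := fun h => h1 (F_left_mem _ _ _ _ _ h)
  have vb : vd (Fin.cons b S : Fin (k+1) → Fin n) ≠ 0 := fun h => h2 (F_left_mem _ _ _ _ _ h)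
  have vc : vd (Fin.cons c T : Fin (k+1) → Fin n) ≠ 0 := fun h => h2 (F_right_mem _ _ _ _ _ h)
  have vdd : vd (Fin.cons d T : Fin (k+1) → Fin n) ≠ 0 := fun h => h1 (F_right_mem _ _ _ _ _ h)
  have p1 : 0 < vd (Fin.cons a S : Fin (k+1) → Fin n) * vd (Fin.cons d T : Fin (k+1) → Fin n)
      * F A S T a d := lt_of_le_of_ne (tn_vd hA _ _) (mul_ne_zero (mul_ne_zero va vdd) h1).symm
  have p2 : 0 < vd (Fin.cons b S : Fin (k+1) → Fin n) * vd (Fin.cons c T : Fin (k+1) → Fin n)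
      * F A S T b c := lt_of_le_of_ne (tn_vd hA _ _) (mul_ne_zero (mul_ne_zero vb vc) h2).symm
  have p3 := tn_vd hA (Fin.cons a (Fin.cons b S : Fin (k+1) → Fin n) : Fin (k+2) → Fin n)
    (Fin.cons c (Fin.cons d T : Fin (k+1) → Fin n) : Fin (k+2) → Fin n)
  have p4 := mul_nonneg p3 (mul_pos (mul_pos (vd_pos hS) (vd_pos hT)) hD).le
  have e1 := vd_cons_cons a b S
  have e2 := vd_cons_cons c d T
  have e3 := F2_eq A S T hD.ne' a b c d
  rw [h0] at e3
  have e4 : (0:ℝ) ≤ (vd (Fin.cons a (Fin.cons b S : Fin (k+1) → Fin n) : Fin (k+2) → Fin n) * vd S)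
      * (vd (Fin.cons c (Fin.cons d T : Fin (k+1) → Fin n) : Fin (k+2) → Fin n) * vd T)
      * ((A.submatrix (Fin.cons a (Fin.cons b S : Fin (k+1) → Fin n) : Fin (k+2) → Fin n)
      (Fin.cons c (Fin.cons d T : Fin (k+1) → Fin n) : Fin (k+2) → Fin n)).det *
      (A.submatrix S T).det) := by
    calc (0:ℝ) ≤ _ := p4
      _ = _ := by ring
  rw [e1, e2, e3] at e4
  have := mul_pos hpos (mul_pos p1 p2)
  linarith

lemma row_dep {n k : ℕ} (A : Matrix (Fin n) (Fin n) ℝ) (S T : Fin k → Fin n)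
    (hD : (A.submatrix S T).det ≠ 0) (a : Fin n) :
    ∃ w : Fin k → ℝ, ∀ y, F A S T a y = 0 → A a y = ∑ s, w s * A (S s) y := by
  refine ⟨(A.submatrix id T * (A.submatrix S T)⁻¹) a, fun y hy => ?_⟩
  rw [F_eq A S T hD] at hy
  have hg : g A S T a y = 0 := (mul_eq_zero.1 hy).resolve_left hD
  unfold g at hg
  rw [Matrix.sub_apply, Matrix.mul_apply] at hg
  exact sub_eq_zero.1 hg

lemma det_zero_of_dep {n k m : ℕ} (A : Matrix (Fin n) (Fin n) ℝ) (S : Fin k → Fin n)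
    (a : Fin n) (w : Fin k → ℝ) (e : Fin (k+1) ≃ Fin m) (q : Fin m → Fin n) (p : Fin m → Fin n)
    (hp : p ∘ e = Fin.cons a S)
    (h : ∀ j, A a (q j) = ∑ s, w s * A (S s) (q j)) :
    (A.submatrix p q).det = 0 := by
  rw [← Matrix.exists_vecMul_eq_zero_iff]
  refine ⟨(Fin.cons (-1) w : Fin (k+1) → ℝ) ∘ e.symm, ?_, ?_⟩
  · intro h0
    have := congrFun h0 (e 0)
    simp at this
  · funext j
    rw [Matrix.vecMul, dotProduct, ← Equiv.sum_comp e]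
    have : ∀ i, p (e i) = (Fin.cons a S : Fin (k+1) → Fin n) i := fun i => congrFun hp i
    simp only [Function.comp, Equiv.symm_apply_apply, Matrix.submatrix_apply, this]
    rw [Fin.sum_univ_succ]
    simp [h]

lemma det_zero_of_dep' {n k : ℕ} (A : Matrix (Fin n) (Fin n) ℝ) (hn : A.det ≠ 0)
    (S T : Fin k → Fin n) (hD : (A.submatrix S T).det ≠ 0)
    (a : Fin n) (ha : a ∉ Set.range S) (h : ∀ y, F A S T a y = 0) : False := by
  obtain ⟨w, hw⟩ := row_dep A S T hD a
  have hv : (Pi.single a 1 - ∑ s, w s • (Pi.single (S s) 1 : Fin n → ℝ)) ᵥ* A = 0 := by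
    rw [Matrix.sub_vecMul, Matrix.sum_vecMul]
    funext y
    simp [Matrix.smul_vecMul, Matrix.row, hw y (h y)]
  have h0 := congrFun (Matrix.eq_zero_of_vecMul_eq_zero hn hv) a
  have h1 : ∀ s, (Pi.single (S s) 1 : Fin n → ℝ) a = 0 := fun s =>
    Pi.single_eq_of_ne (fun hh => ha ⟨s, hh.symm⟩) _
  simp [h1] at h0

lemma det_split {n k : ℕ} (A : Matrix (Fin n) (Fin n) ℝ) (r c : Fin (k+1) → Fin n)
    (p : Fin (k+1)) :
    F A (r ∘ p.succAbove) (c ∘ p.succAbove) (r p) (c p) = (A.submatrix r c).det := by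
  have h : ∀ q : Fin (k+1) → Fin n,
      (Fin.cons (q p) (q ∘ p.succAbove) : Fin (k+1) → Fin n) = q ∘ p.cycleRange.symm := by
    intro q
    funext i
    refine Fin.cases ?_ (fun j => ?_) i
    · simp
    · simp
  unfold F
  rw [h, h, det_perm_perm, sign_sq, one_mul]

lemma strictMono_gap {n k : ℕ} {c : Fin (k+1) → Fin n} (hc : StrictMono c) :
    ((c 0 : Fin n) : ℕ) + k ≤ c (Fin.last k) := by
  have : ∀ j : Fin (k+1), ((c 0 : Fin n) : ℕ) + j ≤ c j := by
    intro j
    induction j using Fin.induction with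
    | zero => simp
    | succ j ih =>
      have : c j.castSucc < c j.succ := hc (Fin.castSucc_lt_succ)
      have h2 : ((c j.castSucc : Fin n) : ℕ) < c j.succ := this
      simp at ih ⊢
      omega
  simpa using this (Fin.last k)

/-- first indices -/
def fi {n j : ℕ} (hj : j ≤ n) : Fin j → Fin n := fun k => ⟨k.val, by have := k.isLt; omega⟩
/-- last indices -/
def la {n j : ℕ} (hj : j ≤ n) : Fin j → Fin n :=
  fun k => ⟨n - j + k.val, by have := k.isLt; omega⟩

lemma fi_mono {n j : ℕ} (hj : j ≤ n) : StrictMono (fi hj) := by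
  intro a b h
  simp only [fi, Fin.mk_lt_mk]
  exact h

lemma la_mono {n j : ℕ} (hj : j ≤ n) : StrictMono (la hj) := by
  intro a b h
  simp only [la, Fin.mk_lt_mk]
  have : (a : ℕ) < b := h
  omega

lemma succAbove_notMem {n k : ℕ} {r : Fin (k+1) → Fin n} (hr : StrictMono r) (p : Fin (k+1)) :
    r p ∉ Set.range (r ∘ p.succAbove) := by
  rintro ⟨s, hs⟩
  exact Fin.succAbove_ne p s (hr.injective hs)

lemma cons_comp {n k : ℕ} (q : Fin (k+1) → Fin n) (p : Fin (k+1)) :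
    q ∘ p.cycleRange.symm = (Fin.cons (q p) (q ∘ p.succAbove) : Fin (k+1) → Fin n) := by
  funext i
  refine Fin.cases ?_ (fun j => ?_) i
  · simp
  · simp

lemma half {n k : ℕ} {M : Matrix (Fin n) (Fin n) ℝ} (hM : TotallyNonneg M) (hn : M.det ≠ 0)
    (hk : k + 1 ≤ n)
    (IH : ∀ r c : Fin k → Fin n, StrictMono r → StrictMono c → 0 < (M.submatrix r c).det)
    (hur : (M.submatrix (fi hk) (la hk)).det ≠ 0)
    (r c : Fin (k+1) → Fin n) (hr : StrictMono r) (hc : StrictMono c)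
    (h : ∀ d, c 0 ≤ d →
      F M (r ∘ (0 : Fin (k+1)).succAbove) (c ∘ (0 : Fin (k+1)).succAbove) (r 0) d = 0) :
    False := by
  have sm : ∀ (q : Fin (k+1) → Fin n) (p : Fin (k+1)), StrictMono q →
      StrictMono (q ∘ p.succAbove) := fun q p hq => hq.comp (Fin.strictMono_succAbove p)
  have gap := strictMono_gap hc
  have gapr := strictMono_gap hr
  have hlt := (c (Fin.last k)).isLt
  have hla := la_mono hk
  have z1 : (M.submatrix r (la hk)).det = 0 := by
    obtain ⟨w, hw⟩ := row_dep M _ _ (IH _ _ (sm r 0 hr) (sm c 0 hc)).ne' (r 0)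
    refine det_zero_of_dep M _ (r 0) w (0 : Fin (k+1)).cycleRange.symm (la hk) r
      (cons_comp r 0) (fun j => hw _ (h _ ?_))
    rw [Fin.le_def]
    simp only [la]
    omega
  rw [← det_split M r (la hk) (Fin.last k)] at z1
  have hD := IH _ _ (sm r (Fin.last k) hr) (sm (la hk) (Fin.last k) hla)
  by_cases hall : ∀ d, F M (r ∘ (Fin.last k).succAbove) (la hk ∘ (Fin.last k).succAbove)
      (r (Fin.last k)) d = 0
  · exact det_zero_of_dep' M hn _ _ hD.ne' _ (succAbove_notMem hr _) hall
  push Not at hall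
  obtain ⟨d, hd⟩ := hall
  have hdne : d ≠ la hk (Fin.last k) := by
    rintro rfl
    exact hd z1
  have hdlt : (d : ℕ) < la hk (Fin.last k) := by
    have h1 := d.isLt
    have h2 : (d : ℕ) ≠ la hk (Fin.last k) := fun hh => hdne (Fin.ext hh)
    simp only [la, Fin.val_last] at h2 ⊢
    omega
  have hcol : ∀ b, b ≤ r (Fin.last k) →
      F Mᵀ (la hk ∘ (Fin.last k).succAbove) (r ∘ (Fin.last k).succAbove)
      (la hk (Fin.last k)) b = 0 := by
    intro b hb
    rw [F_transpose]
    rcases hb.eq_or_lt with rfl | hb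
    · exact z1
    · refine (cross hM (sm r _ hr) (sm (la hk) _ hla) hD (d := d) ?_ z1).resolve_left hd
      have hb' : ((b : ℕ) : ℝ) < ((r (Fin.last k) : ℕ) : ℝ) := by exact_mod_cast hb
      have hd' : ((d : ℕ) : ℝ) < ((la hk (Fin.last k) : ℕ) : ℝ) := by exact_mod_cast hdlt
      exact mul_pos_of_neg_of_neg (by linarith) (by linarith)
  have hD' : (Mᵀ.submatrix (la hk ∘ (Fin.last k).succAbove)
      (r ∘ (Fin.last k).succAbove)).det ≠ 0 := by
    rw [← Matrix.det_transpose]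
    exact hD.ne'
  obtain ⟨w, hw⟩ := row_dep Mᵀ _ _ hD' (la hk (Fin.last k))
  have z2 : (Mᵀ.submatrix (la hk) (fi hk)).det = 0 := by
    refine det_zero_of_dep Mᵀ _ (la hk (Fin.last k)) w (Fin.last k).cycleRange.symm (fi hk)
      (la hk) (cons_comp _ _) (fun j => hw _ (hcol _ ?_))
    rw [Fin.le_def]
    simp only [fi]
    have := j.isLt
    omega
  rw [← Matrix.det_transpose] at z2
  exact hur z2

lemma tp_of_corners {n : ℕ} {M : Matrix (Fin n) (Fin n) ℝ} (hM : TotallyNonneg M)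
    (hn : M.det ≠ 0)
    (hll : ∀ (j : ℕ) (hj : j ≤ n), (M.submatrix (la hj) (fi hj)).det ≠ 0)
    (hur : ∀ (j : ℕ) (hj : j ≤ n), (M.submatrix (fi hj) (la hj)).det ≠ 0) :
    TotallyPos M := by
  intro k
  induction k with
  | zero => intro r c _ _; simp
  | succ k IH =>
    intro r c hr hc
    refine lt_of_le_of_ne (hM _ r c hr hc) fun h0 => ?_
    have hk : k + 1 ≤ n := by
      simpa using Fintype.card_le_of_injective r hr.injective
    have sm : ∀ (q : Fin (k+1) → Fin n) (p : Fin (k+1)), StrictMono q →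
      StrictMono (q ∘ p.succAbove) := fun q p hq => hq.comp (Fin.strictMono_succAbove p)
    have z := h0.symm
    rw [← det_split M r c 0] at z
    by_cases hall : ∀ d, c 0 ≤ d →
      F M (r ∘ (0 : Fin (k+1)).succAbove) (c ∘ (0 : Fin (k+1)).succAbove) (r 0) d = 0
    · exact half hM hn hk IH (hur _ hk) r c hr hc hall
    push Not at hall
    obtain ⟨d, hd, hd0⟩ := hall
    have hd1 : c 0 < d := lt_of_le_of_ne hd (by rintro rfl; exact hd0 z)
    refine half (M := Mᵀ) (tn_transpose hM) (by rwa [Matrix.det_transpose]) hk ?_ ?_ c r hc hr ?_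
    · intro p q hp hq
      rw [← Matrix.det_transpose]
      exact IH q p hq hp
    · rw [← Matrix.det_transpose]
      exact hll _ hk
    · intro b hb
      rw [F_transpose]
      rcases hb.eq_or_lt with rfl | hb
      · exact z
      · refine (cross hM (sm r _ hr) (sm c _ hc) (IH _ _ (sm r _ hr) (sm c _ hc)) (d := d)
          ?_ z).resolve_left hd0
        have hb' : ((r 0 : ℕ) : ℝ) < ((b : ℕ) : ℝ) := by exact_mod_cast hb
        have hd' : ((c 0 : ℕ) : ℝ) < ((d : ℕ) : ℝ) := by exact_mod_cast hd1
        exact mul_pos (by linarith) (by linarith)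

lemma leading_pos {n : ℕ} {M : Matrix (Fin n) (Fin n) ℝ} (hM : TotallyNonneg M)
    (hn : M.det ≠ 0) (k : ℕ) (hk : k ≤ n) : 0 < (M.submatrix (fi hk) (fi hk)).det := by
  induction k with
  | zero => simp
  | succ k ih =>
    refine lt_of_le_of_ne (hM _ _ _ (fi_mono hk) (fi_mono hk)) fun h0 => ?_
    have hD := ih (by omega)
    have hS : fi hk ∘ (Fin.last k).succAbove = fi (show k ≤ n by omega) := by
      funext i
      simp [fi]
    have z := h0.symm
    have hm := fi_mono (show k ≤ n by omega)
    have nm := succAbove_notMem (fi_mono hk) (Fin.last k)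
    rw [← det_split M _ _ (Fin.last k)] at z
    rw [hS] at z nm
    have key : ∀ {N : Matrix (Fin n) (Fin n) ℝ} (d : Fin n), d < fi hk (Fin.last k) →
        F N (fi (show k ≤ n by omega)) (fi (show k ≤ n by omega)) (fi hk (Fin.last k)) d = 0 := by
      intro N d hd
      apply F_right_mem
      by_contra hne
      have hinj := vd_ne.1 hne
      have hd' : (d : ℕ) < k := by simpa [fi, Fin.lt_def] using hd
      have := @hinj 0 (Fin.succ ⟨d, hd'⟩) (by rw [Fin.cons_zero, Fin.cons_succ]; rfl)
      exact absurd this (Fin.succ_ne_zero _).symm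
    by_cases hall : ∀ d, F M (fi (show k ≤ n by omega)) (fi (show k ≤ n by omega))
        (fi hk (Fin.last k)) d = 0
    · exact det_zero_of_dep' M hn _ _ hD.ne' _ nm hall
    push Not at hall
    obtain ⟨d, hd⟩ := hall
    have hd1 : fi hk (Fin.last k) < d := by
      rcases lt_trichotomy d (fi hk (Fin.last k)) with h | h | h
      · exact absurd (key d h) hd
      · subst h; exact absurd z hd
      · exact h
    refine det_zero_of_dep' Mᵀ (by rwa [Matrix.det_transpose]) (fi (show k ≤ n by omega))
      (fi (show k ≤ n by omega)) ?_ _ nm (fun b => ?_)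
    · rw [← Matrix.det_transpose]; exact hD.ne'
    · rcases lt_trichotomy b (fi hk (Fin.last k)) with h | h | h
      · exact key b h
      · subst h; rw [F_transpose]; exact z
      · rw [F_transpose]
        refine (cross hM hm hm hD (d := d) ?_ z).resolve_left hd
        have hb' : ((fi hk (Fin.last k) : ℕ) : ℝ) < ((b : ℕ) : ℝ) := by exact_mod_cast h
        have hd' : ((fi hk (Fin.last k) : ℕ) : ℝ) < ((d : ℕ) : ℝ) := by exact_mod_cast hd1
        exact mul_pos (by linarith) (by linarith)

lemma ll_step {n : ℕ} {A : Matrix (Fin n) (Fin n) ℝ} (hA : TotallyNonneg A) (hn : A.det ≠ 0)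
    {j : ℕ} (hj : j ≤ n) {w m : ℕ} (hw : 0 < w) (hwm : w ≤ m) (h : 0 < llMinor (A ^ w) j hj) :
    0 < llMinor (A ^ m) j hj := by
  induction m, hwm using Nat.le_induction with
  | base => exact h
  | succ m hm ih =>
    have hT : TotallyNonneg (A ^ m) := by
      obtain ⟨m, rfl⟩ : ∃ m', m = m' + 1 := ⟨m - 1, by omega⟩
      exact tn_pow hA m
    have h1 := cb_ge hT hA (la_mono hj) (fi_mono hj) (fi hj)
    rw [← pow_succ] at h1
    have h2 := mul_pos ih (leading_pos hA hn j hj)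
    exact pos_of_mul_pos_right (lt_of_lt_of_le h2 h1) (by positivity)

lemma ur_step {n : ℕ} {A : Matrix (Fin n) (Fin n) ℝ} (hA : TotallyNonneg A) (hn : A.det ≠ 0)
    {j : ℕ} (hj : j ≤ n) {w m : ℕ} (hw : 0 < w) (hwm : w ≤ m) (h : 0 < urMinor (A ^ w) j hj) :
    0 < urMinor (A ^ m) j hj := by
  induction m, hwm using Nat.le_induction with
  | base => exact h
  | succ m hm ih =>
    have hT : TotallyNonneg (A ^ m) := by
      obtain ⟨m, rfl⟩ : ∃ m', m = m' + 1 := ⟨m - 1, by omega⟩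
      exact tn_pow hA m
    have h1 := cb_ge hA hT (fi_mono hj) (la_mono hj) (fi hj)
    rw [← pow_succ'] at h1
    have h2 := mul_pos (leading_pos hA hn j hj) ih
    exact pos_of_mul_pos_right (lt_of_lt_of_le h2 h1) (by positivity)

end TPaux

/-- For an oscillatory A, the exponent r(A) equals max{r_ℓ(A), r_u(A)}, where r_ℓ(A)
[r_u(A)] is the least positive power making all lower-left [upper-right] corner minors,
except possibly the determinant, positive. -/
theorem stmt16 {n : ℕ} (A : Matrix (Fin n) (Fin n) ℝ)
    (hTN : TotallyNonneg A) (hosc : ∃ k : ℕ, 0 < k ∧ TotallyPos (A ^ k))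
    (w v r : ℕ)
    (hw : IsLeast {w : ℕ | 0 < w ∧
        ∀ (j : ℕ) (hj : j ≤ n), 1 ≤ j → j < n → 0 < llMinor (A ^ w) j hj} w)
    (hv : IsLeast {v : ℕ | 0 < v ∧
        ∀ (j : ℕ) (hj : j ≤ n), 1 ≤ j → j < n → 0 < urMinor (A ^ v) j hj} v)
    (hr : IsLeast {r : ℕ | 0 < r ∧ TotallyPos (A ^ r)} r) :
    r = max w v := by 
  have hn : A.det ≠ 0 := by
    obtain ⟨k, hk, hP⟩ := hosc
    have h := hP n id id strictMono_id strictMono_id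
    rw [Matrix.submatrix_id_id, Matrix.det_pow] at h
    intro h0
    rw [h0, zero_pow hk.ne'] at h
    exact lt_irrefl _ h
  apply le_antisymm
  · apply hr.2
    refine ⟨lt_max_of_lt_left hw.1.1, ?_⟩
    have hw0 := hw.1.1
    have hpos : 0 < max w v := lt_max_of_lt_left hw0
    have hT : TotallyNonneg (A ^ max w v) := by
      obtain ⟨m, hm⟩ : ∃ m', max w v = m' + 1 := ⟨max w v - 1, by omega⟩
      rw [hm]
      exact TPaux.tn_pow hTN m
    have hdet : (A ^ max w v).det ≠ 0 := by
      rw [Matrix.det_pow]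
      exact pow_ne_zero _ hn
    refine TPaux.tp_of_corners hT hdet (fun j hj => ?_) (fun j hj => ?_)
    · rcases Nat.eq_zero_or_pos j with rfl | hj0
      · simp
      rcases hj.eq_or_lt with rfl | hlt
      · have e1 : TPaux.la hj = id := by funext i; simp [TPaux.la]
        have e2 : TPaux.fi hj = id := by funext i; simp [TPaux.fi]
        rw [e1, e2, Matrix.submatrix_id_id]
        exact hdet
      · exact (TPaux.ll_step hTN hn hj hw.1.1 (le_max_left w v) (hw.1.2 j hj hj0 hlt)).ne'
    · rcases Nat.eq_zero_or_pos j with rfl | hj0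
      · simp
      rcases hj.eq_or_lt with rfl | hlt
      · have e1 : TPaux.la hj = id := by funext i; simp [TPaux.la]
        have e2 : TPaux.fi hj = id := by funext i; simp [TPaux.fi]
        rw [e1, e2, Matrix.submatrix_id_id]
        exact hdet
      · exact (TPaux.ur_step hTN hn hj hv.1.1 (le_max_right w v) (hv.1.2 j hj hj0 hlt)).ne'
  · apply max_le
    · exact hw.2 ⟨hr.1.1, fun j hj _ _ => hr.1.2 j _ _ (TPaux.la_mono hj) (TPaux.fi_mono hj)⟩
    · exact hv.2 ⟨hr.1.1, fun j hj _ _ => hr.1.2 j _ _ (TPaux.fi_mono hj) (TPaux.la_mono hj)⟩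
end
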